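/- Let (G,T) be a bipartite graft, F a minimum join of (G,T), and r ∈ V(G). Let K be a decapital distance component of (G,T) with respect to r, with F-root r_K. Let r' ∈ V(G)\V(K) be K-congruent to r, and let x ∈ V(K). Then a path between r' and x is F-shortest between r' and x if and only if it is the edge-disjoint concatenation of an F-shortest path between r' and r_K and a path inside K between r_K and x that is F-shortest among paths of K between r_K and x. -/

import Mathlib

/-! The distances from `r` measure joins: switching `F` along a path from `r` to `v` shows that
`|F| + dist_F(r, v)` is the minimum size of an edge set whose mod 2 boundary is that of `F` plus
`r + v` (`isJoinSize_distF`). Everything about the distance component `K` is deduced from exchanges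
of such minimum edge sets along paths and closed sets in their symmetric differences.

* A minimum edge set for a vertex of `K` uses no edge leaving `K` (`IsJoinSize.no_leaving`), and
  one for a vertex outside `K` uses at most one (`IsLevelComp.unique_leaving`). Applied to `F`, which
  is minimum for `r`, this is Sebő's theorem: `F` meets the cut of a distance component in no edge
  or in exactly the beam.
* Every edge lies in the cut of exactly one component `{v : dist_F(r, v) ≤ j}`, with `j` the
  distance of its lower end. Summing over the cuts (`IsJoinSize.cut_bound`) bounds the weight of a
  trail from a boundary vertex of `K` to `x ∈ K` from below by `dist_F(r, x) - i`, where `i` is the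
  level of `K`, and strictly so if the trail leaves `K` without using the beam
  (`HasBeam.trail_bound`).
* A shortest path from `r` to `x` can then only enter `K` through the beam and stay in `K`, so the
  bound is attained by a path from `r_K` inside `K` (`HasBeam.exists_inner`).
* Let a path from `r'` to `x` enter `K` for the first time through the edge `s z`. If this edge is
  not the beam, then continuing inside `K` from `z` to `r_K` and leaving through the beam gives a
  trail to `s_K`, so that congruence makes the initial piece expensive. If it is the beam, the piece
  up to `r_K` has weight at least `dist_F(r', r_K)`. In both cases the weight is at least
  `dist_F(r', r_K) + dist_F(r, x) - i`, with equality only for paths through the beam that stay in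
  `K` afterwards (`HasBeam.path_bound`).

Hence `dist_F(r', x) = dist_F(r', r_K) + dist_F(r, x) - i` (`HasBeam.distF_eq`), and the
characterization of the shortest paths is the case of equality.
-/

namespace TightCuts

open SimpleGraph

variable {V : Type*}

/-- `(G, T)` is a graft: every connected component of `G` contains an even
number of vertices of `T`. -/
def IsGraft (G : SimpleGraph V) (T : Set V) : Prop :=
  ∀ c : G.ConnectedComponent, Even ((T ∩ {v | G.connectedComponentMk v = c}).ncard)

/-- `F` is a join of the graft `(G, T)`: a set of edges such that a vertex is
incident with an odd number of edges of `F` exactly when it lies in `T`. -/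
def IsJoin (G : SimpleGraph V) (T : Set V) (F : Set (Sym2 V)) : Prop :=
  F ⊆ G.edgeSet ∧ ∀ v : V, (Odd ({e ∈ F | v ∈ e}).ncard ↔ v ∈ T)

/-- `ν(G, T)`: the minimum size of a join of `(G, T)`. -/
noncomputable def nu (G : SimpleGraph V) (T : Set V) : ℕ :=
  sInf {n | ∃ F : Set (Sym2 V), IsJoin G T F ∧ F.ncard = n}

/-- `F` is a minimum join of `(G, T)`. -/
def IsMinJoin (G : SimpleGraph V) (T : Set V) (F : Set (Sym2 V)) : Prop :=
  IsJoin G T F ∧ F.ncard = nu G T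

open Classical in
/-- The `F`-weight of an edge: `-1` if the edge lies in `F`, `+1` otherwise. -/
noncomputable def edgeWt (F : Set (Sym2 V)) (e : Sym2 V) : ℤ :=
  if e ∈ F then -1 else 1

/-- The `F`-weight of a walk: the sum of the `F`-weights of its edges. -/
noncomputable def walkWt (F : Set (Sym2 V)) {G : SimpleGraph V} {x y : V}
    (p : G.Walk x y) : ℤ :=
  (p.edges.map (edgeWt F)).sum

/-- The `F`-distance between `x` and `y`: the minimum `F`-weight of a path
between `x` and `y`. -/
noncomputable def distF (G : SimpleGraph V) (F : Set (Sym2 V)) (x y : V) : ℤ :=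
  sInf {n : ℤ | ∃ p : G.Walk x y, p.IsPath ∧ walkWt F p = n}

/-- `K` is (the vertex set of) a connected component of the subgraph of `G`
induced by `U`. -/
def IsComponentOf (G : SimpleGraph V) (U K : Set V) : Prop :=
  K.Nonempty ∧ K ⊆ U ∧ (G.induce K).Connected ∧
    ∀ x ∈ K, ∀ y ∈ U, G.Adj x y → y ∈ K

/-- `K` is a distance component of the graft with respect to root `r` at level `i`
(with respect to a minimum join `F`): `i` is attained as an `F`-distance from `r`,
and `K` is a connected component of the subgraph induced by the vertices at
`F`-distance at most `i` from `r`. -/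
def IsDistCompAt (G : SimpleGraph V) (F : Set (Sym2 V)) (r : V) (i : ℤ) (K : Set V) : Prop :=
  (∃ x, distF G F r x = i) ∧ IsComponentOf G {x | distF G F r x ≤ i} K

/-- `K` is a decapital distance component with respect to root `r`: a distance
component (at some level) not containing `r`. -/
def IsDecapDistComp (G : SimpleGraph V) (F : Set (Sym2 V)) (r : V) (K : Set V) : Prop :=
  ∃ i : ℤ, IsDistCompAt G F r i K ∧ r ∉ K

/-- The edge cut `δ_G(K)`: edges of `G` with exactly one end in `K`. -/
def cutEdges (G : SimpleGraph V) (K : Set V) : Set (Sym2 V) :=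
  {e | e ∈ G.edgeSet ∧ ∃ x y, e = s(x, y) ∧ x ∈ K ∧ y ∉ K}

/-- An edge is allowed in `(G, T)` if some minimum join contains it. -/
def Allowed (G : SimpleGraph V) (T : Set V) (e : Sym2 V) : Prop :=
  ∃ F, IsMinJoin G T F ∧ e ∈ F

/-- Two vertices are factor-connected if there is a walk between them all of
whose edges are allowed. -/
def FactorConnected (G : SimpleGraph V) (T : Set V) (u v : V) : Prop :=
  ∃ p : G.Walk u v, ∀ e ∈ p.edges, Allowed G T e

/-- `C` is (the vertex set of) a factor-component of `(G, T)`: an equivalence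
class of factor-connectivity. -/
def IsFactorComponent (G : SimpleGraph V) (T : Set V) (C : Set V) : Prop :=
  ∃ v, C = {u | FactorConnected G T u v}

/-- The Kotzig–Lovász relation: `u ∼ v` iff `u = v`, or `u` and `v` are
factor-connected (hence in the same factor-component) and
`ν(G, T) = ν(G, T Δ {u, v})`. -/
def klRel (G : SimpleGraph V) (T : Set V) (u v : V) : Prop :=
  u = v ∨ (FactorConnected G T u v ∧ nu G T = nu G (symmDiff T {u, v}))

/-- `S` is a Kotzig–Lovász class of `(G, T)`. -/
def IsKLClass (G : SimpleGraph V) (T : Set V) (S : Set V) : Prop :=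
  ∃ v, S = {u | klRel G T u v}

/-- `A(K)` for a distance component `K` at level `i`: the vertices of `K` at
`F`-distance exactly `i` from `r`. -/
def AK (G : SimpleGraph V) (F : Set (Sym2 V)) (r : V) (i : ℤ) (K : Set V) : Set V :=
  K ∩ {x | distF G F r x = i}

/-- `D(K) = V(K) \ A(K)`. -/
def DK (G : SimpleGraph V) (F : Set (Sym2 V)) (r : V) (i : ℤ) (K : Set V) : Set V :=
  K \ AK G F r i K

/-- `S` is the root class of `K`: a Kotzig–Lovász class containing all ends in
`K` of allowed edges of the cut `δ_G(K)`. -/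
def IsRootClass (G : SimpleGraph V) (T : Set V) (K S : Set V) : Prop :=
  IsKLClass G T S ∧ ∀ e ∈ cutEdges G K, Allowed G T e → ∀ u ∈ e, u ∈ K → u ∈ S

/-- `S` is the antiroot class of `K`: a Kotzig–Lovász class containing all ends
outside `K` of allowed edges of the cut `δ_G(K)`. -/
def IsAntirootClass (G : SimpleGraph V) (T : Set V) (K S : Set V) : Prop :=
  IsKLClass G T S ∧ ∀ e ∈ cutEdges G K, Allowed G T e → ∀ u ∈ e, u ∉ K → u ∈ S

/-- The family `𝒜(K)`: the root fragment `K ∩ S_K` together with all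
Kotzig–Lovász classes other than `S_K` that contain a vertex of `A(K)`. -/
def famA (G : SimpleGraph V) (T : Set V) (F : Set (Sym2 V)) (r : V) (i : ℤ)
    (K S_K : Set V) : Set (Set V) :=
  insert (K ∩ S_K) {S | IsKLClass G T S ∧ S ≠ S_K ∧ (S ∩ AK G F r i K).Nonempty}

/-- `L` is adjacent to a vertex of `S` by an allowed edge. -/
def AdjAllowed (G : SimpleGraph V) (T : Set V) (L S : Set V) : Prop :=
  ∃ x ∈ L, ∃ s ∈ S, G.Adj x s ∧ Allowed G T s(x, s)

/-- `𝒩_K(S)`: the family of connected components of `G[D(K)]` adjacent to a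
vertex of `S` by an allowed edge. -/
def NKfam (G : SimpleGraph V) (T : Set V) (F : Set (Sym2 V)) (r : V) (i : ℤ)
    (K S : Set V) : Set (Set V) :=
  {L | IsComponentOf G (DK G F r i K) L ∧ AdjAllowed G T L S}

/-- `U_K(S)`: the union of the vertex sets of the members of `𝒩_K(S)`. -/
def UK (G : SimpleGraph V) (T : Set V) (F : Set (Sym2 V)) (r : V) (i : ℤ)
    (K S : Set V) : Set V :=
  ⋃₀ NKfam G T F r i K S

/-- `X` is an `F`-negative set for `S`: `X` is disjoint from `S` and every
`x ∈ X` admits a path of negative `F`-weight from `x` to a vertex of `S` whose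
vertices, except the end in `S`, all lie in `X`. -/
def IsNegSet (G : SimpleGraph V) (F : Set (Sym2 V)) (S X : Set V) : Prop :=
  X ⊆ Sᶜ ∧ ∀ x ∈ X, ∃ y ∈ S, ∃ p : G.Walk x y, p.IsPath ∧ walkWt F p < 0 ∧
    ∀ v ∈ p.support, v ≠ y → v ∈ X

/-- The maximum `F`-negative set for `S`: the union of all `F`-negative sets
for `S`. -/
def maxNegSet (G : SimpleGraph V) (F : Set (Sym2 V)) (S : Set V) : Set V :=
  ⋃₀ {X | IsNegSet G F S X}

/-- The maximum `F`-negative set for `S` avoiding `Y`. -/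
def maxNegSetAvoiding (G : SimpleGraph V) (F : Set (Sym2 V)) (S Y : Set V) : Set V :=
  ⋃₀ {X | IsNegSet G F S X ∧ Disjoint X Y}

/-! ### Mod 2 boundaries and weights of edge sets -/

section Algebra

lemma two_fn : (2 : V → ZMod 2) = 0 := by funext x; rfl

variable [DecidableEq V]

/-- The mod 2 boundary of an edge set: the parity of its degree at each vertex. -/
def bd (A : Finset (Sym2 V)) (v : V) : ZMod 2 := ∑ e ∈ A, if v ∈ e then 1 else 0

/-- The indicator of a vertex in the space of mod 2 vertex vectors. -/
def pt (a : V) (v : V) : ZMod 2 := if v = a then 1 else 0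

/-- The total weight of an edge set. -/
noncomputable def wsum (F : Set (Sym2 V)) (A : Finset (Sym2 V)) : ℤ := ∑ e ∈ A, edgeWt F e

lemma bd_symmDiff (A B : Finset (Sym2 V)) : bd (symmDiff A B) = bd A + bd B := by
  funext v
  simp only [bd, Pi.add_apply]
  rw [symmDiff_def, Finset.sup_eq_union, Finset.sum_union (by
    rw [Finset.disjoint_left]; intro e h1 h2; simp at h1 h2; tauto)]
  rw [← Finset.sum_inter_add_sum_sdiff A B, ← Finset.sum_inter_add_sum_sdiff B A,
    Finset.inter_comm B A]
  generalize (∑ e ∈ A ∩ B, if v ∈ e then (1 : ZMod 2) else 0) = x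
  generalize (∑ e ∈ A \ B, if v ∈ e then (1 : ZMod 2) else 0) = y
  generalize (∑ e ∈ B \ A, if v ∈ e then (1 : ZMod 2) else 0) = z
  revert x y z; decide

lemma bd_edge {a b : V} (h : a ≠ b) : bd {s(a, b)} = pt a + pt b := by
  funext v
  simp only [bd, pt, Finset.sum_singleton, Sym2.mem_iff, Pi.add_apply]
  by_cases h1 : v = a <;> by_cases h2 : v = b <;> simp_all

lemma symmDiff_singleton_of_mem {A : Finset (Sym2 V)} {e : Sym2 V} (h : e ∈ A) :
    symmDiff A {e} = A.erase e := by
  ext f; simp only [Finset.mem_symmDiff, Finset.mem_singleton, Finset.mem_erase]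
  by_cases h' : f = e <;> simp_all

lemma symmDiff_singleton_of_notMem {A : Finset (Sym2 V)} {e : Sym2 V} (h : e ∉ A) :
    symmDiff A {e} = insert e A := by
  ext f; simp only [Finset.mem_symmDiff, Finset.mem_singleton, Finset.mem_insert]
  by_cases h' : f = e <;> simp_all

lemma symmDiff_of_subset {A D : Finset (Sym2 V)} (h : A ⊆ D) : symmDiff D A = D \ A := by
  ext f; simp only [Finset.mem_symmDiff, Finset.mem_sdiff]
  have := @h f; tauto

/-- Switching a join along an edge set changes its size by the weight of that set. -/
lemma card_symmDiff (A B : Finset (Sym2 V)) :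
    ((symmDiff A B).card : ℤ) = A.card + wsum (A : Set (Sym2 V)) B := by
  rw [symmDiff_def, Finset.sup_eq_union, Finset.card_union_of_disjoint (by
    rw [Finset.disjoint_left]; intro e h1 h2; simp at h1 h2; tauto)]
  have h1 := Finset.card_sdiff_add_card_inter A B
  rw [wsum, ← Finset.sum_inter_add_sum_sdiff B A]
  have h2 : ∑ e ∈ B ∩ A, edgeWt (A : Set (Sym2 V)) e = - (B ∩ A).card := by
    rw [Finset.sum_congr rfl (g := fun _ => (-1 : ℤ))]
    · simp
    · intro e he; simp at he; simp [edgeWt, he.2]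
  have h3 : ∑ e ∈ B \ A, edgeWt (A : Set (Sym2 V)) e = (B \ A).card := by
    rw [Finset.sum_congr rfl (g := fun _ => (1 : ℤ))]
    · simp
    · intro e he; simp at he; simp [edgeWt, he.2]
  rw [h2, h3, Finset.inter_comm B A]; push_cast; omega

/-- Switching two edge sets along a subset of their symmetric difference preserves the
total size. -/
lemma card_exchange {A H C : Finset (Sym2 V)} (hC : C ⊆ symmDiff A H) :
    (symmDiff A C).card + (symmDiff H C).card = A.card + H.card := by
  have h1 := card_symmDiff A C
  have h2 := card_symmDiff H C
  have : wsum (A : Set (Sym2 V)) C = - wsum (H : Set (Sym2 V)) C := by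
    rw [wsum, wsum, ← Finset.sum_neg_distrib]
    refine Finset.sum_congr rfl fun e he => ?_
    have := hC he
    rw [Finset.mem_symmDiff] at this
    rcases this with h | h <;> simp [edgeWt, h.1, h.2]
  omega

lemma wsum_union (F : Set (Sym2 V)) {A B : Finset (Sym2 V)} (h : Disjoint A B) :
    wsum F (A ∪ B) = wsum F A + wsum F B := Finset.sum_union h

variable {G : SimpleGraph V}

lemma bd_trail {a b : V} (p : G.Walk a b) (hp : p.IsTrail) :
    bd p.edges.toFinset = pt a + pt b := by
  induction p with
  | nil => funext v; simp only [Walk.edges_nil, List.toFinset_nil, bd, Finset.sum_empty,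
             Pi.add_apply]; generalize pt _ v = x; revert x; decide
  | @cons u v w h p ih =>
    rw [Walk.isTrail_cons] at hp
    rw [Walk.edges_cons, List.toFinset_cons,
      ← symmDiff_singleton_of_notMem (by simpa using hp.2), bd_symmDiff, ih hp.1, bd_edge h.ne]
    funext x
    simp only [Pi.add_apply]
    generalize pt u x = a; generalize pt v x = b; generalize pt w x = c
    revert a b c; decide

lemma wsum_trail (F : Set (Sym2 V)) {a b : V} (p : G.Walk a b) (hp : p.IsTrail) :
    wsum F p.edges.toFinset = walkWt F p := by
  rw [wsum, walkWt, List.sum_toFinset _ hp.edges_nodup]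

/-- An edge set with boundary `a + b` contains an `a`–`b` path. -/
lemma exists_path_of_bd {a b : V} {D : Finset (Sym2 V)} (hD : ∀ e ∈ D, e ∈ G.edgeSet)
    (h : bd D = pt a + pt b) : ∃ p : G.Walk a b, p.IsPath ∧ p.edges.toFinset ⊆ D := by
  suffices H : ∃ p : G.Walk a b, ∀ e ∈ p.edges, e ∈ D by
    obtain ⟨p, hp⟩ := H
    exact ⟨p.bypass, p.bypass_isPath, fun e he =>
      hp e (p.edges_bypass_subset_edges (by simpa using he))⟩
  induction hn : D.card generalizing D a with
  | zero =>
    obtain rfl : D = ∅ := by simpa using hn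
    by_cases hab : a = b
    · subst hab; exact ⟨.nil, by simp⟩
    · have := congrFun h a
      simp [bd, pt, hab] at this
  | succ n ih =>
    by_cases hab : a = b
    · subst hab; exact ⟨.nil, by simp⟩
    have ha := congrFun h a
    obtain ⟨e, he, hae⟩ : ∃ e ∈ D, a ∈ e := by
      by_contra! hcon
      rw [bd, Finset.sum_eq_zero (fun e he => by simp [hcon e he])] at ha
      simp [pt, hab] at ha
    obtain ⟨c, rfl⟩ := hae
    have hac : G.Adj a c := hD _ he
    obtain ⟨p, hp⟩ := ih (a := c) (D := D.erase s(a, c))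
      (fun e he => hD e (Finset.mem_of_mem_erase he)) (by
        rw [← symmDiff_singleton_of_mem he, bd_symmDiff, h, bd_edge hac.ne]
        funext x
        simp only [Pi.add_apply]
        generalize pt a x = a; generalize pt b x = b; generalize pt c x = c
        revert a b c; decide) (by rw [Finset.card_erase_of_mem he]; omega)
    refine ⟨.cons hac p, fun e he' => ?_⟩
    rw [Walk.edges_cons, List.mem_cons] at he'
    rcases he' with rfl | he'
    · exact he
    · exact Finset.mem_of_mem_erase (hp e he')

end Algebra

/-! ### Level components and minimum joins for their vertices -/

section LevelSets

variable [DecidableEq V] {G : SimpleGraph V} {t : V → ZMod 2} {f : V → ℤ} {R : V → Prop}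
  {j : ℤ} {K : Set V}

/-- `f v` is the minimum size of an edge set with boundary `t + v`, for the vertices `v` of a
union `R` of connected components of `G`; for the other vertices it is only a lower bound. The
field `step` holds when `G` is bipartite. -/
structure IsJoinSize (G : SimpleGraph V) (t : V → ZMod 2) (f : V → ℤ) (R : V → Prop) : Prop where
  lb : ∀ v A, (∀ e ∈ A, e ∈ G.edgeSet) → bd A = t + pt v → f v ≤ A.card
  ex : ∀ v, R v → ∃ A, (∀ e ∈ A, e ∈ G.edgeSet) ∧ bd A = t + pt v ∧ (A.card : ℤ) = f v
  step : ∀ u v, G.Adj u v → R u → f v = f u + 1 ∨ f u = f v + 1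
  cl : ∀ u v, G.Adj u v → R u → R v

/-- `A` is an edge set of minimum size `f v` with boundary `t + v`. -/
def MinAt (G : SimpleGraph V) (t : V → ZMod 2) (f : V → ℤ) (v : V) (A : Finset (Sym2 V)) : Prop :=
  (∀ e ∈ A, e ∈ G.edgeSet) ∧ bd A = t + pt v ∧ (A.card : ℤ) = f v

/-- `K` is a component of the sublevel set `{f ≤ j}`, contained in `R`. -/
structure IsLevelComp (G : SimpleGraph V) (f : V → ℤ) (R : V → Prop) (j : ℤ) (K : Set V) :
    Prop where
  conn : ∀ u ∈ K, ∀ v ∈ K, ∃ p : G.Walk u v, ∀ q ∈ p.support, f q ≤ j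
  le : ∀ u ∈ K, f u ≤ j
  out : ∀ y ∈ K, ∀ z, z ∉ K → G.Adj y z → j < f z
  mem : ∀ u ∈ K, R u

lemma symmDiff_edges {A B : Finset (Sym2 V)} (hA : ∀ e ∈ A, e ∈ G.edgeSet)
    (hB : ∀ e ∈ B, e ∈ G.edgeSet) : ∀ e ∈ symmDiff A B, e ∈ G.edgeSet := by
  intro e he
  rw [Finset.mem_symmDiff] at he
  rcases he with h | h
  · exact hA _ h.1
  · exact hB _ h.1

lemma path_edges {a b : V} (p : G.Walk a b) : ∀ e ∈ p.edges.toFinset, e ∈ G.edgeSet := by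
  intro e he
  exact p.edges_subset_edgeSet (by simpa using he)

lemma IsJoinSize.lb_erase (hf : IsJoinSize G t f R) {a b : V} {A : Finset (Sym2 V)}
    (hA : ∀ e ∈ A, e ∈ G.edgeSet) (hb : bd A = t + pt a) (he : s(a, b) ∈ A) :
    f b + 1 ≤ A.card := by
  have hab : G.Adj a b := hA _ he
  have h := hf.lb b (A.erase s(a, b)) (fun e h => hA e (Finset.mem_of_mem_erase h)) (by
    rw [← symmDiff_singleton_of_mem he, bd_symmDiff, hb, bd_edge hab.ne]
    have := two_fn (V := V); grind)
  have := Finset.card_erase_add_one he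
  omega

lemma MinAt.erase {a b : V} {A : Finset (Sym2 V)} (hA : MinAt G t f a A)
    (he : s(a, b) ∈ A) (h : f a = f b + 1) : MinAt G t f b (A.erase s(a, b)) := by
  have hab : G.Adj a b := hA.1 _ he
  refine ⟨fun e h => hA.1 e (Finset.mem_of_mem_erase h), ?_, ?_⟩
  · rw [← symmDiff_singleton_of_mem he, bd_symmDiff, hA.2.1, bd_edge hab.ne]
    have := two_fn (V := V); grind
  · have := Finset.card_erase_add_one he
    have := hA.2.2
    omega

lemma MinAt.insert {a b : V} {A : Finset (Sym2 V)} (hA : MinAt G t f a A) (hab : G.Adj a b)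
    (he : s(a, b) ∉ A) (h : f b = f a + 1) : MinAt G t f b (insert s(a, b) A) := by
  refine ⟨fun e h => ?_, ?_, ?_⟩
  · rw [Finset.mem_insert] at h
    rcases h with rfl | h
    · exact hab
    · exact hA.1 e h
  · rw [← symmDiff_singleton_of_notMem he, bd_symmDiff, hA.2.1, bd_edge hab.ne]
    have := two_fn (V := V); grind
  · have := Finset.card_insert_of_notMem he
    have := hA.2.2
    omega

/-- Two minimum joins exchanged along a closed subset of their symmetric difference stay
minimum. -/
lemma IsJoinSize.exchange (hf : IsJoinSize G t f R) {u v : V} {A H C : Finset (Sym2 V)}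
    (hA : MinAt G t f u A) (hH : MinAt G t f v H) (hC : C ⊆ symmDiff A H) (hb : bd C = 0) :
    MinAt G t f u (symmDiff A C) ∧ MinAt G t f v (symmDiff H C) := by
  have hCe : ∀ e ∈ C, e ∈ G.edgeSet := fun e he => symmDiff_edges hA.1 hH.1 e (hC he)
  have hA' := symmDiff_edges hA.1 hCe
  have hH' := symmDiff_edges hH.1 hCe
  have bA : bd (symmDiff A C) = t + pt u := by rw [bd_symmDiff, hb, hA.2.1, add_zero]
  have bH : bd (symmDiff H C) = t + pt v := by rw [bd_symmDiff, hb, hH.2.1, add_zero]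
  have h1 := hf.lb _ _ hA' bA
  have h2 := hf.lb _ _ hH' bH
  have h3 := card_exchange hC
  have h4 := hA.2.2
  have h5 := hH.2.2
  exact ⟨⟨hA', bA, by omega⟩, ⟨hH', bH, by omega⟩⟩

/-- A minimum join for a vertex of a level component uses no edge leaving this component. The
proof moves the vertex `v` along a walk from `y`. When `v` moves up along an edge `v w`, a minimum
join for `w` using the edge `y z` is compared with a minimum join for `v` enlarged by `v w`. -/
lemma IsJoinSize.no_leaving (hf : IsJoinSize G t f R) {y z : V} (hyz : G.Adj y z) (hz : j < f z)
    {w : V} (hw : R w) (p : G.Walk w y) (hp : ∀ q ∈ p.support, f q ≤ j)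
    {A : Finset (Sym2 V)} (hA : MinAt G t f w A) : s(y, z) ∉ A := by
  induction p generalizing A with
  | nil =>
    intro he
    have h1 := hf.lb_erase hA.1 hA.2.1 he
    have h2 := hA.2.2
    have h3 := hp _ (Walk.start_mem_support _)
    omega
  | @cons w v y h p ih =>
    intro hg
    have hRv := hf.cl _ _ h hw
    have ih' : ∀ {B}, MinAt G t f v B → s(y, z) ∉ B := fun hB =>
      ih hyz hRv (fun q hq => hp q (by simp [hq])) hB
    have hwj : f w ≤ j := hp w (by simp)
    have hvj : f v ≤ j := hp v (by simp)
    have hyj : f y ≤ j := hp y (by simp)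
    have hne : s(y, z) ≠ s(w, v) := by
      intro h'
      rw [Sym2.eq_iff] at h'
      rcases h' with ⟨_, rfl⟩ | ⟨_, rfl⟩ <;> omega
    have hyR : R y := by
      clear * - hRv p hf
      induction p with
      | nil => exact hRv
      | cons h p ih => exact ih (hf.cl _ _ h hRv)
    have hA2 := hA.2.2
    by_cases hwv : s(w, v) ∈ A
    · rcases hf.step _ _ h hw with h' | h'
      · have := hf.lb_erase hA.1 hA.2.1 hwv
        omega
      · exact ih' (hA.erase hwv h') (Finset.mem_erase.2 ⟨hne, hg⟩)
    rcases hf.step _ _ h hw with h' | h'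
    · exact ih' (hA.insert h hwv h') (Finset.mem_insert_of_mem hg)
    obtain ⟨B, hB⟩ := hf.ex v hRv
    replace hB : MinAt G t f v B := hB
    have hvB : s(v, w) ∉ B := fun hmem => by
      have := hf.lb_erase hB.1 hB.2.1 hmem
      have := hB.2.2
      omega
    have hH := hB.insert h.symm hvB h'
    have hgH : s(y, z) ∉ insert s(v, w) B := by
      rw [Finset.mem_insert, Sym2.eq_swap (a := v)]
      exact fun h => h.elim hne (ih' hB)
    have hwH : s(w, v) ∈ insert s(v, w) B := by simp [Sym2.eq_swap]
    generalize insert s(v, w) B = H at hH hgH hwH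
    have hgD : s(y, z) ∈ symmDiff A H := by simp [Finset.mem_symmDiff, hg, hgH]
    have hDe := symmDiff_edges hA.1 hH.1
    obtain ⟨Q, hQ, hQD⟩ := exists_path_of_bd (G := G) (a := y) (b := z)
      (D := (symmDiff A H).erase s(y, z)) (fun e he => hDe e (Finset.mem_of_mem_erase he)) (by
        rw [← symmDiff_singleton_of_mem hgD, bd_symmDiff, bd_symmDiff, hA.2.1, hH.2.1,
          bd_edge hyz.ne]
        have := two_fn (V := V); grind)
    by_cases hwQ : w ∈ Q.support
    · -- the piece of the circuit from `y` to `w` yields joins for `y` of total size `2 * f w`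
      set C := (Q.takeUntil w hwQ).edges.toFinset with hCdef
      have hCsub : C ⊆ Q.edges.toFinset := fun e he => by
        simp only [hCdef, List.mem_toFinset] at he ⊢
        exact Q.edges_takeUntil_subset_edges hwQ he
      have hgC : s(y, z) ∉ C := fun h => by
        have := hQD (hCsub h)
        simp at this
      have hCb : bd C = pt y + pt w := bd_trail _ (hQ.takeUntil hwQ).isTrail
      have hCD : C ⊆ symmDiff A H := fun e he => Finset.mem_of_mem_erase (hQD (hCsub he))
      have hCe := path_edges (Q.takeUntil w hwQ)
      have h1 := hf.lb_erase (a := y) (b := z) (symmDiff_edges hA.1 hCe) (by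
        rw [bd_symmDiff, hA.2.1, hCb]; have := two_fn (V := V); grind)
        (by rw [Finset.mem_symmDiff]; exact .inl ⟨hg, hgC⟩)
      have h2 := hf.lb y _ (symmDiff_edges hH.1 hCe) (by
        rw [bd_symmDiff, hH.2.1, hCb]; have := two_fn (V := V); grind)
      have h3 := card_exchange hCD
      have h4 := hH.2.2
      have h5 := hf.step _ _ hyz hyR
      simp only [← hCdef] at h1 h2
      omega
    · -- otherwise the circuit can be switched without touching `w`
      have hgQ : s(y, z) ∉ Q.edges.toFinset := fun h => by
        have := hQD h
        simp at this
      have hwC : s(w, v) ∉ insert s(y, z) Q.edges.toFinset := fun h => by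
        rw [Finset.mem_insert] at h
        rcases h with h | h
        · exact hne h.symm
        · exact hwQ (Q.fst_mem_support_of_mem_edges (by simpa using h))
      obtain ⟨-, hH'⟩ := hf.exchange hA hH (C := insert s(y, z) Q.edges.toFinset)
        (fun e he => by
          rw [Finset.mem_insert] at he
          rcases he with rfl | he
          · exact hgD
          · exact Finset.mem_of_mem_erase (hQD he)) (by
          rw [← symmDiff_singleton_of_notMem hgQ, bd_symmDiff, bd_edge hyz.ne,
            bd_trail _ hQ.isTrail]
          have := two_fn (V := V); grind)
      refine ih' (hH'.erase (b := v) ?_ h') (Finset.mem_erase.2 ⟨hne, ?_⟩)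
      · rw [Finset.mem_symmDiff]; exact .inl ⟨hwH, hwC⟩
      · rw [Finset.mem_symmDiff]; exact .inr ⟨Finset.mem_insert_self _ _, hgH⟩

lemma IsLevelComp.no_leaving (hK : IsLevelComp G f R j K) (hf : IsJoinSize G t f R) {u y z : V}
    (hu : u ∈ K) (hy : y ∈ K) (hz : z ∉ K) {A : Finset (Sym2 V)} (hA : MinAt G t f u A) :
    s(y, z) ∉ A := by
  intro he
  have hyz : G.Adj y z := hA.1 _ he
  obtain ⟨p, hp⟩ := hK.conn u hu y hy
  exact hf.no_leaving hyz (hK.out y hy z hz hyz) (hK.mem u hu) p hp hA he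

end LevelSets

/-! ### Uniqueness of the leaving edge -/

section Beam

variable {G : SimpleGraph V} {t : V → ZMod 2} {f : V → ℤ} {R : V → Prop} {j : ℤ} {K : Set V}

/-- A walk that visits `K` and ends outside `K` has a last exit from `K`. -/
lemma exists_last_exit {K : Set V} {u v : V} (W : G.Walk u v) (hu : ∃ w ∈ W.support, w ∈ K)
    (hv : v ∉ K) :
    ∃ (y z : V) (p : G.Walk u y) (h : G.Adj y z) (q : G.Walk z v),
      W = p.append (.cons h q) ∧ y ∈ K ∧ ∀ w ∈ q.support, w ∉ K := by
  induction W with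
  | nil =>
    obtain ⟨w, hw, hwK⟩ := hu
    simp only [Walk.support_nil, List.mem_singleton] at hw
    exact absurd (hw ▸ hwK) hv
  | @cons u b v h W ih =>
    by_cases hW : ∃ w ∈ W.support, w ∈ K
    · obtain ⟨y, z, p, h', q, rfl, hy, hq⟩ := ih hW hv
      exact ⟨y, z, .cons h p, h', q, rfl, hy, hq⟩
    · obtain ⟨w, hw, hwK⟩ := hu
      rw [Walk.support_cons, List.mem_cons] at hw
      rcases hw with rfl | hw
      · exact ⟨w, b, .nil, h, W, rfl, hwK, fun w hw hwK => hW ⟨w, hw, hwK⟩⟩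
      · exact absurd ⟨w, hw, hwK⟩ hW

/-- A walk that starts outside `K` and visits `K` has a first entry into `K`. -/
lemma exists_first_entry {K : Set V} {u v : V} (W : G.Walk u v) (hv : ∃ w ∈ W.support, w ∈ K)
    (hu : u ∉ K) :
    ∃ (s z : V) (p : G.Walk u s) (h : G.Adj s z) (q : G.Walk z v),
      W = p.append (.cons h q) ∧ z ∈ K ∧ ∀ w ∈ p.support, w ∉ K := by
  induction W with
  | nil =>
    obtain ⟨w, hw, hwK⟩ := hv
    simp only [Walk.support_nil, List.mem_singleton] at hw
    exact absurd (hw ▸ hwK) hu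
  | @cons u b v h W ih =>
    by_cases hb : b ∈ K
    · exact ⟨u, b, .nil, h, W, rfl, hb, by simpa using hu⟩
    · obtain ⟨w, hw, hwK⟩ := hv
      rw [Walk.support_cons, List.mem_cons] at hw
      have hw' := hw.resolve_left (fun e => hu (e ▸ hwK))
      obtain ⟨s, z, p, h', q, rfl, hz, hp⟩ := ih ⟨w, hw', hwK⟩ hb
      refine ⟨s, z, .cons h p, h', q, rfl, hz, fun w hw => ?_⟩
      rw [Walk.support_cons, List.mem_cons] at hw
      rcases hw with rfl | hw
      · exact hu
      · exact hp w hw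

variable [DecidableEq V]

open Classical in
lemma bd_filter_add (A : Finset (Sym2 V)) (I : Sym2 V → Prop) :
    bd (A.filter I) + bd (A.filter (fun e => ¬ I e)) = bd A := by
  funext v
  exact Finset.sum_filter_add_sum_filter_not A I _

open Classical in
/-- The minimum joins for two vertices of a level component `K` can be recombined: one inside `K`,
the other one elsewhere. -/
lemma IsLevelComp.glue (hK : IsLevelComp G f R j K) (hf : IsJoinSize G t f R) {u y : V}
    (hu : u ∈ K) (hy : y ∈ K) {B N : Finset (Sym2 V)} (hB : MinAt G t f u B)
    (hN : MinAt G t f y N) :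
    MinAt G t f y (N.filter (fun e => ∀ w ∈ e, w ∈ K) ∪
      B.filter (fun e => ¬ ∀ w ∈ e, w ∈ K)) := by
  set I : Sym2 V → Prop := fun e => ∀ w ∈ e, w ∈ K with hI
  have hdisj : ∀ X Y : Finset (Sym2 V), Disjoint (X.filter I) (Y.filter (fun e => ¬ I e)) := by
    intro X Y
    rw [Finset.disjoint_left]
    intro e h1 h2
    exact (Finset.mem_filter.1 h2).2 (Finset.mem_filter.1 h1).2
  -- the boundary and the size of a recombined edge set
  have key : ∀ (a b : V) (X Y : Finset (Sym2 V)), a ∈ K → b ∈ K → MinAt G t f a X →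
      MinAt G t f b Y → (∀ e ∈ X.filter I ∪ Y.filter (fun e => ¬ I e), e ∈ G.edgeSet) ∧
        bd (X.filter I ∪ Y.filter (fun e => ¬ I e)) = t + pt a := by
    intro a b X Y ha hb hX hY
    constructor
    · intro e he
      rw [Finset.mem_union, Finset.mem_filter, Finset.mem_filter] at he
      rcases he with he | he
      · exact hX.1 e he.1
      · exact hY.1 e he.1
    have e1 : bd (X.filter I ∪ Y.filter (fun e => ¬ I e)) =
        bd (X.filter I) + bd (Y.filter (fun e => ¬ I e)) := by
      funext v
      exact Finset.sum_union (hdisj X Y)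
    have inK : ∀ (c : V) (Z : Finset (Sym2 V)), c ∈ K → MinAt G t f c Z → ∀ w ∈ K,
        bd (Z.filter (fun e => ¬ I e)) w = 0 := by
      intro c Z hc hZ w hw
      refine Finset.sum_eq_zero fun e he => if_neg fun hwe => ?_
      rw [Finset.mem_filter] at he
      obtain ⟨v, rfl⟩ := hwe
      refine he.2 fun q hq => ?_
      by_contra hqK
      rw [Sym2.mem_iff] at hq
      rcases hq with rfl | rfl
      · exact hqK hw
      · exact hK.no_leaving hf hc hw hqK hZ he.1
    have outK : ∀ (Z : Finset (Sym2 V)), ∀ w ∉ K, bd (Z.filter I) w = 0 := by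
      intro Z w hw
      refine Finset.sum_eq_zero fun e he => if_neg fun hwe => ?_
      exact hw ((Finset.mem_filter.1 he).2 w hwe)
    funext w
    rw [e1]
    by_cases hw : w ∈ K
    · rw [Pi.add_apply, inK b Y hb hY w hw, ← inK a X ha hX w hw, ← Pi.add_apply,
        bd_filter_add, hX.2.1]
    · have hb' : w ≠ b := fun h => hw (h ▸ hb)
      have ha' : w ≠ a := fun h => hw (h ▸ ha)
      rw [Pi.add_apply, outK X w hw, ← outK Y w hw, ← Pi.add_apply, bd_filter_add, hY.2.1]
      simp [pt, ha', hb']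
  obtain ⟨k1, k2⟩ := key y u N B hy hu hN hB
  obtain ⟨k3, k4⟩ := key u y B N hu hy hB hN
  have l1 := hf.lb _ _ k1 k2
  have l2 := hf.lb _ _ k3 k4
  refine ⟨k1, k2, ?_⟩
  rw [Finset.card_union_of_disjoint (hdisj _ _)] at l1 l2 ⊢
  have c1 := Finset.card_filter_add_card_filter_not (s := N) I
  have c2 := Finset.card_filter_add_card_filter_not (s := B) I
  have := hB.2.2
  have := hN.2.2
  omega

/-- A minimum join for a vertex outside a level component `K` uses at most one edge
leaving `K`. -/
lemma IsLevelComp.unique_leaving (hK : IsLevelComp G f R j K) (hf : IsJoinSize G t f R) {u v : V}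
    (hu : u ∈ K) (hv : v ∉ K) {A : Finset (Sym2 V)} (hA : MinAt G t f v A) :
    ∃ g, ∀ y ∈ K, ∀ z, z ∉ K → s(y, z) ∈ A → s(y, z) = g := by
  classical
  obtain ⟨B, hB⟩ := hf.ex u (hK.mem u hu)
  replace hB : MinAt G t f u B := hB
  obtain ⟨W, hW, hWD⟩ := exists_path_of_bd (G := G) (a := u) (b := v) (D := symmDiff A B)
    (symmDiff_edges hA.1 hB.1) (by
      rw [bd_symmDiff, hA.2.1, hB.2.1]; have := two_fn (V := V); grind)
  have hWb := bd_trail W hW.isTrail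
  -- outside the path `W` the two joins differ by a closed edge set, which avoids the cut
  obtain ⟨hA2', hB2⟩ := hf.exchange hA hB (C := symmDiff A B \ W.edges.toFinset)
    Finset.sdiff_subset (by
      rw [← symmDiff_of_subset hWD, bd_symmDiff, bd_symmDiff, hA.2.1, hB.2.1, hWb]
      have := two_fn (V := V); grind)
  have hA2 : MinAt G t f v (symmDiff B W.edges.toFinset) := by
    convert hA2' using 1
    ext e
    have := @hWD e
    simp only [Finset.mem_symmDiff, Finset.mem_sdiff] at this ⊢
    tauto
  obtain ⟨y, z, Z, h, q, hWeq, hy, hq⟩ := exists_last_exit W ⟨u, W.start_mem_support, hu⟩ hv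
  have hWt : W.IsTrail := hW.isTrail
  set E1 := Z.edges.toFinset with hE1
  set E2 := (Walk.cons h q).edges.toFinset with hE2
  have hWE : W.edges.toFinset = E1 ∪ E2 := by
    rw [hWeq, Walk.edges_append, List.toFinset_append]
  have hnd := hWt.edges_nodup
  rw [hWeq, Walk.edges_append, List.nodup_append'] at hnd
  have hdis : Disjoint E1 E2 := by
    rw [hE1, hE2, List.disjoint_toFinset_iff_disjoint]; exact hnd.2.2
  have hZt : Z.IsTrail := ⟨hnd.1⟩
  have hqt : (Walk.cons h q).IsTrail := ⟨hnd.2.1⟩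
  have hE2out : ∀ e ∈ E2, ¬ ∀ w ∈ e, w ∈ K := by
    intro e he hI
    simp only [hE2, Walk.edges_cons, List.toFinset_cons, Finset.mem_insert,
      List.mem_toFinset] at he
    rcases he with rfl | he
    · exact hq z q.start_mem_support (hI z (by simp))
    · induction e with | _ a b =>
      exact hq a (q.fst_mem_support_of_mem_edges he) (hI a (by simp))
  -- `N` is a minimum join for `y` that agrees with `B` outside `K`
  obtain ⟨N', hN'⟩ := hf.ex y (hK.mem y hy)
  have hN := hK.glue hf hu hy hB hN'
  set N := N'.filter (fun e => ∀ w ∈ e, w ∈ K) ∪ B.filter (fun e => ¬ ∀ w ∈ e, w ∈ K)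
  have hNB : wsum (N : Set (Sym2 V)) E2 = wsum (B : Set (Sym2 V)) E2 := by
    refine Finset.sum_congr rfl fun e he => ?_
    have := hE2out e he
    have : e ∈ N ↔ e ∈ B := by
      simp only [N, Finset.mem_union, Finset.mem_filter]; tauto
    simp [edgeWt, this]
  have hl := hf.lb v (symmDiff N E2) (symmDiff_edges hN.1 (path_edges _)) (by
    rw [bd_symmDiff, hN.2.1, bd_trail _ hqt]; have := two_fn (V := V); grind)
  rw [card_symmDiff, hNB, hN.2.2, ← hA2.2.2, card_symmDiff, hWE, wsum_union _ hdis] at hl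
  have hZb : bd (symmDiff B E1) = t + pt y := by
    rw [bd_symmDiff, hB.2.1, bd_trail _ hZt]; have := two_fn (V := V); grind
  have hZe := symmDiff_edges hB.1 (path_edges Z)
  have hZ : MinAt G t f y (symmDiff B E1) := by
    refine ⟨hZe, hZb, le_antisymm ?_ (hf.lb _ _ hZe hZb)⟩
    rw [card_symmDiff]
    omega
  refine ⟨s(y, z), fun y' hy' z' hz' hg => ?_⟩
  have n1 := hK.no_leaving hf hu hy' hz' hB
  have n2 := hK.no_leaving hf hu hy' hz' hB2
  have n3 := hK.no_leaving hf hy hy' hz' hZ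
  have m : s(y', z') ∈ E1 ∪ E2 := by
    rw [← hWE]
    by_contra hcon
    apply n2
    simp only [Finset.mem_symmDiff, Finset.mem_sdiff]
    tauto
  have m2 : s(y', z') ∈ E2 := by
    simp only [Finset.mem_symmDiff, Finset.mem_union] at n3 m
    tauto
  simp only [hE2, Walk.edges_cons, List.toFinset_cons, Finset.mem_insert, List.mem_toFinset] at m2
  rcases m2 with m2 | m2
  · exact m2
  · exact absurd hy' (hq y' (q.fst_mem_support_of_mem_edges m2))

end Beam

/-! ### Counting along the cuts of level components -/

section Cuts

variable {G : SimpleGraph V} {t : V → ZMod 2} {f : V → ℤ} {R : V → Prop} {j : ℤ} {K : Set V}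

/-- The component of `{f ≤ j}` that contains `u`. -/
def levelComp (G : SimpleGraph V) (f : V → ℤ) (j : ℤ) (u : V) : Set V :=
  {w | ∃ p : G.Walk u w, ∀ q ∈ p.support, f q ≤ j}

/-- The edge `e` has exactly one end in `S`. -/
def Crosses (S : Set V) (e : Sym2 V) : Prop := ∃ y ∈ S, ∃ z, z ∉ S ∧ e = s(y, z)

lemma self_mem_levelComp {u : V} (h : f u ≤ j) : u ∈ levelComp G f j u := ⟨.nil, by simpa using h⟩

lemma levelComp_symm {u v : V} (h : v ∈ levelComp G f j u) : u ∈ levelComp G f j v := by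
  obtain ⟨p, hp⟩ := h
  exact ⟨p.reverse, by simpa using hp⟩

lemma levelComp_trans {i : ℤ} {u v w : V} (hij : i ≤ j) (h : v ∈ levelComp G f i u)
    (h' : w ∈ levelComp G f j v) : w ∈ levelComp G f j u := by
  obtain ⟨p, hp⟩ := h
  obtain ⟨q, hq⟩ := h'
  refine ⟨p.append q, fun x hx => ?_⟩
  rw [Walk.mem_support_append_iff] at hx
  rcases hx with hx | hx
  · exact (hp x hx).trans hij
  · exact hq x hx

lemma levelComp_eq {u v : V} (h : v ∈ levelComp G f j u) :
    levelComp G f j v = levelComp G f j u := by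
  ext w
  exact ⟨levelComp_trans le_rfl h, levelComp_trans le_rfl (levelComp_symm h)⟩

lemma isLevelComp_levelComp (hcl : ∀ u v, G.Adj u v → R u → R v) {u : V} (hR : R u) :
    IsLevelComp G f R j (levelComp G f j u) where
  conn a ha b hb := levelComp_trans le_rfl (levelComp_symm ha) hb
  le a ha := by
    obtain ⟨p, hp⟩ := ha
    exact hp a p.end_mem_support
  out y hy z hz h := by
    by_contra! hle
    refine hz (levelComp_trans le_rfl hy ⟨.cons h .nil, ?_⟩)
    obtain ⟨p, hp⟩ := hy
    simpa using ⟨hp y p.end_mem_support, hle⟩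
  mem a ha := by
    obtain ⟨p, -⟩ := ha
    induction p with
    | nil => exact hR
    | cons h p ih => exact ih (hcl _ _ h hR)

lemma IsLevelComp.eq_levelComp (hK : IsLevelComp G f R j K) {u : V} (hu : u ∈ K) :
    K = levelComp G f j u := by
  ext w
  refine ⟨hK.conn u hu w, ?_⟩
  rintro ⟨p, hp⟩
  induction p with
  | nil => exact hu
  | @cons u v w h p ih =>
    refine ih ?_ (fun q hq => hp q (by simp [hq]))
    by_contra hv
    have := hK.out u hu v hv h
    have := hp v (by simp)
    omega

variable [DecidableEq V]

open Classical in
/-- The number of edges of `X` crossing `S` has the parity of the boundary of `X` on `S`. -/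
lemma card_crosses [Fintype V] {a x : V} {X : Finset (Sym2 V)} (hX : ∀ e ∈ X, e ∈ G.edgeSet)
    (hb : bd X = pt a + pt x) (S : Set V) :
    ((X.filter (Crosses S)).card : ZMod 2) =
      (if a ∈ S then 1 else 0) + (if x ∈ S then 1 else 0) := by
  have hpt : ∀ c : V, ∑ v ∈ Finset.univ.filter (· ∈ S), pt c v = if c ∈ S then 1 else 0 := by
    intro c
    simp [pt, Finset.sum_ite_eq']
  have h1 : ∑ v ∈ Finset.univ.filter (· ∈ S), bd X v =
      (if a ∈ S then 1 else 0) + (if x ∈ S then 1 else 0) := by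
    simp only [hb, Pi.add_apply, Finset.sum_add_distrib, hpt]
  rw [← h1, Finset.natCast_card_filter]
  simp only [bd]
  rw [Finset.sum_comm]
  refine Finset.sum_congr rfl fun e he => ?_
  induction e with | _ c d =>
  have hcd : c ≠ d := (show G.Adj c d from hX _ he).ne
  have h2 : ∀ v, (if v ∈ s(c, d) then (1 : ZMod 2) else 0) = pt c v + pt d v := by
    intro v
    have := congrFun (bd_edge hcd) v
    rw [← Pi.add_apply, ← this]
    simp only [bd, Finset.sum_singleton]
  simp only [h2, Finset.sum_add_distrib, hpt]
  have h3 : Crosses S s(c, d) ↔ (c ∈ S ∧ d ∉ S) ∨ (d ∈ S ∧ c ∉ S) := by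
    constructor
    · rintro ⟨y, hy, z, hz, h⟩
      rw [Sym2.eq_iff] at h
      rcases h with ⟨rfl, rfl⟩ | ⟨rfl, rfl⟩
      · exact .inl ⟨hy, hz⟩
      · exact .inr ⟨hy, hz⟩
    · rintro (⟨h, h'⟩ | ⟨h, h'⟩)
      · exact ⟨c, h, d, h', rfl⟩
      · exact ⟨d, h, c, h', Sym2.eq_swap⟩
  rw [if_congr h3 rfl rfl]
  by_cases hc : c ∈ S <;> by_cases hd : d ∈ S <;> simp [hc, hd]
  rfl

lemma wsum_eq (F A : Finset (Sym2 V)) :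
    wsum (F : Set (Sym2 V)) A = A.card - 2 * (A ∩ F).card := by
  have h1 := card_symmDiff F A
  have h2 := Finset.card_sdiff_add_card_inter F A
  have h3 := Finset.card_sdiff_add_card_inter A F
  rw [symmDiff_def, Finset.sup_eq_union, Finset.card_union_of_disjoint (by
    rw [Finset.disjoint_left]; intro e h1 h2; simp at h1 h2; tauto)] at h1
  rw [Finset.inter_comm F A] at h2
  push_cast at h1
  omega

open Classical in
/-- Cut counting. Every edge belongs to the cut of exactly one set `levelComp G f (f u) u`, namely
for `u` its lower end, so the weight of an edge set `X` with boundary `a + x` is the sum of its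
weights on these cuts. A cut not separating `a` from `x` contributes at least `0`, a separating one
at least `-1`, and there are at most `f a - f x` of the latter. The share of the component of `a`
is kept in the bound. -/
lemma IsJoinSize.cut_bound [Fintype V] (hf : IsJoinSize G t f R) {r : V} {F : Finset (Sym2 V)}
    (hF : MinAt G t f r F) {a x : V} {X : Finset (Sym2 V)}
    (hX : ∀ e ∈ X, e ∈ G.edgeSet) (hXR : ∀ e ∈ X, ∀ v ∈ e, R v) (ha : R a)
    (hb : bd X = pt a + pt x) (hx : x ∈ levelComp G f (f a) a) :
    f x - f a + wsum (F : Set (Sym2 V)) (X.filter (Crosses (levelComp G f (f a) a))) ≤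
      wsum (F : Set (Sym2 V)) X := by
  set lv : V → Set V := fun u => levelComp G f (f u) u with hlv
  have hlvdef : ∀ u, lv u = levelComp G f (f u) u := fun _ => rfl
  rw [← hlvdef a]
  have hxK : x ∈ lv a := hx
  have haK : a ∈ lv a := self_mem_levelComp le_rfl
  have hxa : f x ≤ f a := (isLevelComp_levelComp hf.cl ha).le x hx
  have hxR : R x := (isLevelComp_levelComp hf.cl ha).mem x hx
  set 𝒮 : Finset (Set V) := (Finset.univ.filter R).image lv with h𝒮
  -- decomposition of the weight along the cuts
  have hsum : wsum (F : Set (Sym2 V)) X =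
      ∑ S ∈ 𝒮, wsum (F : Set (Sym2 V)) (X.filter (Crosses S)) := by
    simp only [wsum, Finset.sum_filter]
    rw [Finset.sum_comm]
    refine Finset.sum_congr rfl fun e he => ?_
    obtain ⟨u, v, rfl, huv, hv⟩ : ∃ u v, e = s(u, v) ∧ G.Adj u v ∧ f v = f u + 1 := by
      induction e with | _ c d =>
      have hcd : G.Adj c d := hX _ he
      rcases hf.step c d hcd (hXR _ he c (by simp)) with h | h
      · exact ⟨c, d, rfl, hcd, h⟩
      · exact ⟨d, c, Sym2.eq_swap, hcd.symm, h⟩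
    have hu : R u := hXR _ he u (by simp)
    rw [Finset.sum_eq_single (lv u)]
    · rw [if_pos]
      refine ⟨u, self_mem_levelComp le_rfl, v, fun hv' => ?_, rfl⟩
      have := (isLevelComp_levelComp hf.cl hu).le v hv'
      omega
    · intro S hS hne
      rw [if_neg]
      rintro ⟨y, hy, z, hz, h⟩
      simp only [h𝒮, Finset.mem_image, Finset.mem_filter, Finset.mem_univ, true_and] at hS
      obtain ⟨c, hc, rfl⟩ := hS
      have hC := isLevelComp_levelComp (f := f) (j := f c) hf.cl hc
      have hyz : G.Adj y z := by
        rw [Sym2.eq_iff] at h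
        rcases h with ⟨rfl, rfl⟩ | ⟨rfl, rfl⟩
        · exact huv
        · exact huv.symm
      have h1 := hC.out y hy z hz hyz
      have h2 := hC.le y hy
      have h3 : u = y := by
        rw [Sym2.eq_iff] at h
        rcases h with ⟨rfl, rfl⟩ | ⟨rfl, rfl⟩
        · rfl
        · omega
      subst h3
      have h4 : v = z := Sym2.congr_right.1 h
      subst h4
      have h5 : f u = f c := by omega
      apply hne
      rw [hlvdef, hlvdef, h5]
      exact (levelComp_eq hy).symm
    · intro h
      exact absurd (Finset.mem_image_of_mem lv (Finset.mem_filter.2 ⟨Finset.mem_univ _, hu⟩)) h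
  -- each cut contains at most one edge of `F`
  have hone : ∀ S ∈ 𝒮, (X.filter (Crosses S) ∩ F).card ≤ 1 := by
    intro S hS
    simp only [h𝒮, Finset.mem_image, Finset.mem_filter, Finset.mem_univ, true_and] at hS
    obtain ⟨c, hc, rfl⟩ := hS
    have hC := isLevelComp_levelComp (f := f) (j := f c) hf.cl hc
    have hcc : c ∈ lv c := self_mem_levelComp le_rfl
    rw [Finset.card_le_one]
    intro e he e' he'
    simp only [Finset.mem_inter, Finset.mem_filter] at he he'
    obtain ⟨⟨-, y, hy, z, hz, rfl⟩, heF⟩ := he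
    obtain ⟨⟨-, y', hy', z', hz', rfl⟩, heF'⟩ := he'
    by_cases hr : r ∈ lv c
    · exact absurd heF (hC.no_leaving hf hr hy hz hF)
    · obtain ⟨g, hg⟩ := hC.unique_leaving hf hcc hr hF
      rw [hg y hy z hz heF, hg y' hy' z' hz' heF']
  have hKS : lv a ∈ 𝒮 :=
    Finset.mem_image_of_mem lv (Finset.mem_filter.2 ⟨Finset.mem_univ _, ha⟩)
  rw [hsum, ← Finset.add_sum_erase _ _ hKS]
  -- the cuts that may contribute `-1`
  set 𝒩 := (𝒮.erase (lv a)).filter (fun S => x ∈ S ∧ a ∉ S) with h𝒩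
  have hcard : (𝒩.card : ℤ) ≤ f a - f x := by
    have hsub : 𝒩 ⊆ (Finset.Ico (f x) (f a)).image (fun i => levelComp G f i x) := by
      intro S hS
      simp only [h𝒩, h𝒮, Finset.mem_filter, Finset.mem_erase, Finset.mem_image, Finset.mem_univ,
        true_and] at hS
      obtain ⟨⟨-, c, hc, rfl⟩, hxS, haS⟩ := hS
      have hC := isLevelComp_levelComp (f := f) (j := f c) hf.cl hc
      have h1 := hC.le x hxS
      rw [Finset.mem_image]
      refine ⟨f c, Finset.mem_Ico.2 ⟨h1, ?_⟩, levelComp_eq hxS⟩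
      by_contra! hcon
      refine haS ?_
      have : x ∈ levelComp G f (f c) a :=
        levelComp_trans hcon hx (self_mem_levelComp h1)
      exact levelComp_trans le_rfl hxS (levelComp_symm this)
    have h1 := (Finset.card_le_card hsub).trans Finset.card_image_le
    rw [Int.card_Ico] at h1
    omega
  have hpos : ∑ S ∈ 𝒮.erase (lv a), (if x ∈ S ∧ a ∉ S then (-1 : ℤ) else 0) ≤
      ∑ S ∈ 𝒮.erase (lv a), wsum (F : Set (Sym2 V)) (X.filter (Crosses S)) := by
    refine Finset.sum_le_sum fun S hS => ?_
    have hS' := Finset.mem_of_mem_erase hS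
    have h1 := hone S hS'
    have h2 := card_crosses hX hb S
    have h3 : (X.filter (Crosses S) ∩ F).card ≤ (X.filter (Crosses S)).card :=
      Finset.card_le_card Finset.inter_subset_left
    rw [wsum_eq]
    split_ifs with hsep
    · omega
    · have hiff : a ∈ S ↔ x ∈ S := by
        refine ⟨fun haS => ?_, fun hxS => by by_contra h; exact hsep ⟨hxS, h⟩⟩
        simp only [h𝒮, Finset.mem_image, Finset.mem_filter, Finset.mem_univ, true_and] at hS'
        obtain ⟨c, hc, rfl⟩ := hS'
        have h4 := (isLevelComp_levelComp (f := f) (j := f c) hf.cl hc).le a haS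
        obtain ⟨p, hp⟩ := hx
        exact levelComp_trans le_rfl haS ⟨p, fun q hq => (hp q hq).trans h4⟩
      have h5 : ((X.filter (Crosses S)).card : ZMod 2) = 0 := by
        rw [h2]
        by_cases hxS : x ∈ S
        · rw [if_pos hxS, if_pos (hiff.2 hxS)]; rfl
        · rw [if_neg hxS, if_neg (fun h => hxS (hiff.1 h))]; rfl
      rw [ZMod.natCast_eq_zero_iff] at h5
      omega
  rw [← Finset.sum_filter, Finset.sum_const, ← h𝒩, nsmul_eq_mul, mul_neg_one] at hpos
  linarith

end Cuts

/-! ### The distance function of a minimum join -/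

section Distance

lemma edgeWt_cases (S : Set (Sym2 V)) (e : Sym2 V) : edgeWt S e = -1 ∧ e ∈ S ∨ edgeWt S e = 1 := by
  by_cases h : e ∈ S <;> simp [edgeWt, h]

lemma walkWt_cons (S : Set (Sym2 V)) {G : SimpleGraph V} {x y z : V} (h : G.Adj x y)
    (p : G.Walk y z) :
    walkWt S (.cons h p) = edgeWt S s(x, y) + walkWt S p := by
  simp [walkWt]

lemma walkWt_append (S : Set (Sym2 V)) {G : SimpleGraph V} {x y z : V} (p : G.Walk x y)
    (q : G.Walk y z) :
    walkWt S (p.append q) = walkWt S p + walkWt S q := by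
  simp [walkWt]

lemma walkWt_nil (S : Set (Sym2 V)) {G : SimpleGraph V} (x : V) :
    walkWt S (.nil : G.Walk x x) = 0 := by
  simp [walkWt]

lemma distF_of_not_reachable {G : SimpleGraph V} {F : Finset (Sym2 V)} {x y : V}
    (h : ¬ G.Reachable x y) :
    distF G F x y = 0 := by
  have : {n : ℤ | ∃ p : G.Walk x y, p.IsPath ∧ walkWt (F : Set (Sym2 V)) p = n} = ∅ := by
    ext n
    simp only [Set.mem_ofPred_eq, Set.mem_empty_iff_false, iff_false]
    rintro ⟨p, -⟩
    exact h ⟨p⟩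
  rw [distF, this]
  exact Int.csInf_empty

variable [DecidableEq V] {G : SimpleGraph V} {F : Finset (Sym2 V)}

lemma distF_bddBelow (x y : V) :
    BddBelow {n : ℤ | ∃ p : G.Walk x y, p.IsPath ∧ walkWt (F : Set (Sym2 V)) p = n} := by
  refine ⟨-F.card, ?_⟩
  rintro _ ⟨p, hp, rfl⟩
  have h1 := Finset.card_le_card (Finset.inter_subset_left (s₁ := p.edges.toFinset) (s₂ := F))
  have h2 := Finset.card_le_card (Finset.inter_subset_right (s₁ := p.edges.toFinset) (s₂ := F))
  rw [← wsum_trail _ p hp.isTrail, wsum_eq]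
  omega

lemma distF_le {x y : V} (p : G.Walk x y) (hp : p.IsPath) :
    distF G F x y ≤ walkWt (F : Set (Sym2 V)) p :=
  csInf_le (distF_bddBelow x y) ⟨p, hp, rfl⟩

lemma exists_shortest {x y : V} (h : G.Reachable x y) :
    ∃ p : G.Walk x y, p.IsPath ∧ walkWt (F : Set (Sym2 V)) p = distF G F x y := by
  obtain ⟨p⟩ := h
  exact Int.csInf_mem
    (s := {n : ℤ | ∃ p : G.Walk x y, p.IsPath ∧ walkWt (F : Set (Sym2 V)) p = n})
    ⟨_, p.bypass, p.bypass_isPath, rfl⟩ (distF_bddBelow x y)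

/-- If no closed edge set is negative, then the distance also bounds the weight of an arbitrary
edge set with boundary `x + y`. -/
lemma distF_le_wsum (hpos : ∀ C : Finset (Sym2 V), (∀ e ∈ C, e ∈ G.edgeSet) → bd C = 0 →
    0 ≤ wsum (F : Set (Sym2 V)) C) {x y : V} {A : Finset (Sym2 V)}
    (hA : ∀ e ∈ A, e ∈ G.edgeSet) (hb : bd A = pt x + pt y) :
    distF G F x y ≤ wsum (F : Set (Sym2 V)) A := by
  obtain ⟨p, hp, hpA⟩ := exists_path_of_bd hA hb
  have h1 := distF_le (F := F) p hp
  have h2 := hpos (A \ p.edges.toFinset) (fun e he => hA e (Finset.sdiff_subset he)) (by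
    rw [← symmDiff_of_subset hpA, bd_symmDiff, hb, bd_trail p hp.isTrail]
    have := two_fn (V := V); grind)
  rw [← wsum_trail _ p hp.isTrail] at h1
  have h3 : wsum (F : Set (Sym2 V)) (A \ p.edges.toFinset) +
      wsum (F : Set (Sym2 V)) p.edges.toFinset = wsum (F : Set (Sym2 V)) A :=
    Finset.sum_sdiff hpA
  omega

lemma distF_le_trail (hpos : ∀ C : Finset (Sym2 V), (∀ e ∈ C, e ∈ G.edgeSet) → bd C = 0 →
    0 ≤ wsum (F : Set (Sym2 V)) C) {x y : V} (p : G.Walk x y) (hp : p.IsTrail) :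
    distF G F x y ≤ walkWt (F : Set (Sym2 V)) p := by
  rw [← wsum_trail _ p hp]
  exact distF_le_wsum hpos (path_edges p) (bd_trail p hp)

lemma distF_self (hpos : ∀ C : Finset (Sym2 V), (∀ e ∈ C, e ∈ G.edgeSet) → bd C = 0 →
    0 ≤ wsum (F : Set (Sym2 V)) C) (x : V) : distF G F x x = 0 := by
  apply le_antisymm
  · simpa [walkWt] using distF_le (F := F) (Walk.nil (u := x) (G := G)) .nil
  · obtain ⟨p, hp, h⟩ := exists_shortest (F := F) (Reachable.refl (G := G) x)
    rw [← h, ← wsum_trail _ p hp.isTrail]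
    refine hpos _ (path_edges p) ?_
    rw [bd_trail p hp.isTrail]
    have := two_fn (V := V); grind

lemma walkWt_add_length_even {x y : V} (p : G.Walk x y) (hp : p.IsTrail) :
    Even (walkWt (F : Set (Sym2 V)) p + p.length) := by
  rw [← wsum_trail _ p hp, wsum_eq, List.toFinset_card_of_nodup hp.edges_nodup, Walk.length_edges]
  exact ⟨p.length - (p.edges.toFinset ∩ F).card, by ring⟩

lemma odd_bd_iff [Fintype V] (A : Finset (Sym2 V)) (v : V) :
    Odd ({e ∈ (A : Set (Sym2 V)) | v ∈ e}).ncard ↔ bd A v = 1 := by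
  have h : {e ∈ (A : Set (Sym2 V)) | v ∈ e} = ((A.filter (v ∈ ·) : Finset _) : Set (Sym2 V)) := by
    ext e; simp
  rw [h, Set.ncard_coe_finset, ← ZMod.natCast_eq_one_iff_odd, Finset.natCast_card_filter]
  rfl

/-- A minimum join has no closed edge set of negative weight. -/
lemma IsMinJoin.wsum_nonneg [Fintype V] {T : Set V} (hF : IsMinJoin G T F)
    (C : Finset (Sym2 V)) (hC : ∀ e ∈ C, e ∈ G.edgeSet) (hb : bd C = 0) :
    0 ≤ wsum (F : Set (Sym2 V)) C := by
  have hj : IsJoin G T (symmDiff F C : Finset (Sym2 V)) := by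
    refine ⟨fun e he => symmDiff_edges (fun e he => hF.1.1 he) hC e he, fun v => ?_⟩
    rw [odd_bd_iff, bd_symmDiff, hb, add_zero, ← odd_bd_iff]
    exact hF.1.2 v
  have h1 : nu G T ≤ (symmDiff F C).card := Nat.sInf_le ⟨_, hj, Set.ncard_coe_finset _⟩
  have h2 := hF.2
  rw [Set.ncard_coe_finset] at h2
  have h3 := card_symmDiff F C
  omega

/-- Up to the constant `|F|`, the distances from `r` are the sizes of the minimum joins obtained
by moving a terminal from `r` to the other vertices. -/
lemma isJoinSize_distF (hbip : G.Colorable 2)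
    (hpos : ∀ C : Finset (Sym2 V), (∀ e ∈ C, e ∈ G.edgeSet) → bd C = 0 →
      0 ≤ wsum (F : Set (Sym2 V)) C) (hFe : ∀ e ∈ F, e ∈ G.edgeSet) (r : V) :
    IsJoinSize G (bd F + pt r) (fun v => F.card + distF G F r v) (G.Reachable r) := by
  have hlb : ∀ v A, (∀ e ∈ A, e ∈ G.edgeSet) → bd A = bd F + pt r + pt v →
      (F.card : ℤ) + distF G F r v ≤ A.card := by
    intro v A hA hb
    have h1 := distF_le_wsum hpos (x := r) (y := v) (symmDiff_edges hFe hA) (by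
      rw [bd_symmDiff, hb]; have := two_fn (V := V); grind)
    have h2 := card_symmDiff F (symmDiff F A)
    rw [symmDiff_symmDiff_cancel_left] at h2
    omega
  have hex : ∀ v, G.Reachable r v → ∃ A, (∀ e ∈ A, e ∈ G.edgeSet) ∧
      bd A = bd F + pt r + pt v ∧ (A.card : ℤ) = F.card + distF G F r v := by
    intro v hv
    obtain ⟨p, hp, h⟩ := exists_shortest (F := F) hv
    refine ⟨symmDiff F p.edges.toFinset, symmDiff_edges hFe (path_edges p), ?_, ?_⟩
    · rw [bd_symmDiff, bd_trail p hp.isTrail, add_assoc]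
    · rw [card_symmDiff, wsum_trail _ p hp.isTrail, h]
  have hnear : ∀ u v, G.Adj u v → G.Reachable r u → distF G F r v ≤ distF G F r u + 1 := by
    intro u v huv hu
    obtain ⟨A, hA, hb, hc⟩ := hex u hu
    have h1 := hlb v (symmDiff A {s(u, v)}) (symmDiff_edges hA (by simpa using huv)) (by
      rw [bd_symmDiff, hb, bd_edge huv.ne]; have := two_fn (V := V); grind)
    have h2 : (symmDiff A {s(u, v)}).card ≤ A.card + 1 := by
      by_cases h : s(u, v) ∈ A
      · rw [symmDiff_singleton_of_mem h]
        have := Finset.card_erase_le (s := A) (a := s(u, v))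
        omega
      · rw [symmDiff_singleton_of_notMem h, Finset.card_insert_of_notMem h]
    omega
  refine ⟨hlb, hex, fun u v huv hu => ?_, fun u v huv hu => hu.trans huv.reachable⟩
  have hv : G.Reachable r v := hu.trans huv.reachable
  have h1 := hnear u v huv hu
  have h2 := hnear v u huv.symm hv
  suffices h : distF G F r u ≠ distF G F r v by omega
  intro heq
  obtain ⟨p, hp, hpw⟩ := exists_shortest (F := F) hu
  obtain ⟨q, hq, hqw⟩ := exists_shortest (F := F) hv
  obtain ⟨c⟩ := hbip
  let c' : G.Coloring Bool := (G.recolorOfEquiv finTwoEquiv) c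
  have e1 := c'.even_length_iff_congr p
  have e2 := c'.even_length_iff_congr q
  have e3 : c' u ≠ c' v := c'.valid huv
  have e4 := walkWt_add_length_even (F := F) p hp.isTrail
  have e5 := walkWt_add_length_even (F := F) q hq.isTrail
  rw [hpw] at e4
  rw [hqw, ← heq] at e5
  have e6 : Even p.length ↔ Even q.length := by
    rw [← Int.even_coe_nat, ← Int.even_coe_nat]
    rw [Int.even_add] at e4 e5
    exact e4.symm.trans e5
  rw [e1, e2] at e6
  revert e3 e6
  cases c' r <;> cases c' u <;> cases c' v <;> simp

end Distance

/-! ### Shortest paths into a component with a beam -/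

section Component

variable [DecidableEq V] {G : SimpleGraph V} {F : Finset (Sym2 V)} {r : V} {K : Set V} {i : ℤ}
  {u v : V}

/-- `K` is a component of the set of vertices at distance at most `i` from `r`, it does not
contain `r`, and `u v` with `u ∈ K` is the only edge of `F` that leaves `K`. -/
structure HasBeam (G : SimpleGraph V) (F : Finset (Sym2 V)) (r : V) (K : Set V) (i : ℤ)
    (u v : V) : Prop where
  pos : ∀ C : Finset (Sym2 V), (∀ e ∈ C, e ∈ G.edgeSet) → bd C = 0 →
    0 ≤ wsum (F : Set (Sym2 V)) C
  edges : ∀ e ∈ F, e ∈ G.edgeSet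
  size : IsJoinSize G (bd F + pt r) (fun x => F.card + distF G F r x) (G.Reachable r)
  comp : IsLevelComp G (fun x => F.card + distF G F r x) (G.Reachable r) (F.card + i) K
  notMem : r ∉ K
  mem_F : s(u, v) ∈ F
  fst_mem : u ∈ K
  snd_notMem : v ∉ K
  uniq : ∀ y ∈ K, ∀ z, z ∉ K → s(y, z) ∈ F → y = u ∧ z = v

lemma HasBeam.adj (h : HasBeam G F r K i u v) : G.Adj u v := h.edges _ h.mem_F

lemma HasBeam.boundary (h : HasBeam G F r K i u v) {y z : V} (hy : y ∈ K) (hz : z ∉ K)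
    (hyz : G.Adj y z) : distF G F r y = i ∧ distF G F r z = i + 1 := by
  have h1 := h.comp.le y hy
  have h2 := h.comp.out y hy z hz hyz
  have h3 := h.size.step y z hyz (h.comp.mem y hy)
  omega

/-- The cut counting bound for a trail between two vertices of `K`, the first one on the boundary
of `K`. It is strict for a trail that leaves `K` without using the beam. -/
lemma HasBeam.trail_bound [Fintype V] (h : HasBeam G F r K i u v) {a x : V} (ha : a ∈ K)
    (hx : x ∈ K) (hai : distF G F r a = i) (p : G.Walk a x) (hp : p.IsTrail) :
    distF G F r x - i ≤ walkWt (F : Set (Sym2 V)) p ∧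
      (s(u, v) ∉ p.edges → (∃ w ∈ p.support, w ∉ K) →
        distF G F r x - i < walkWt (F : Set (Sym2 V)) p) := by
  classical
  have hfa : (F.card : ℤ) + distF G F r a = F.card + i := by rw [hai]
  have hKa := h.comp.eq_levelComp ha
  have hmin : MinAt G (bd F + pt r) (fun x => F.card + distF G F r x) r F := by
    refine ⟨h.edges, ?_, ?_⟩
    · have := two_fn (V := V); grind
    · simp [distF_self h.pos]
  have hb := bd_trail p hp
  have hcut := h.size.cut_bound hmin (a := a) (x := x) (X := p.edges.toFinset) (path_edges p) (by
      intro e he w hw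
      rw [List.mem_toFinset] at he
      exact (h.comp.mem a ha).trans
        ⟨p.takeUntil w (p.mem_support_of_mem_edges he hw)⟩)
    (h.comp.mem a ha) hb (by rw [hfa, ← hKa]; exact hx)
  rw [hfa, ← hKa, wsum_trail _ p hp, wsum_eq] at hcut
  set X := p.edges.toFinset.filter (Crosses K) with hX
  have hcard := card_crosses (path_edges p) hb K
  rw [if_pos ha, if_pos hx, ← hX, show (1 : ZMod 2) + 1 = 0 from rfl,
    ZMod.natCast_eq_zero_iff] at hcard
  have hXF : ∀ e ∈ X ∩ F, e = s(u, v) ∧ e ∈ p.edges := by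
    intro e he
    simp only [hX, Finset.mem_inter, Finset.mem_filter, List.mem_toFinset] at he
    obtain ⟨⟨hep, y, hy, z, hz, rfl⟩, heF⟩ := he
    obtain ⟨rfl, rfl⟩ := h.uniq y hy z hz heF
    exact ⟨rfl, hep⟩
  have h1 : (X ∩ F).card ≤ 1 := by
    rw [Finset.card_le_one]
    intro e he e' he'
    rw [(hXF e he).1, (hXF e' he').1]
  have h2 : (X ∩ F).card ≤ X.card := Finset.card_le_card Finset.inter_subset_left
  constructor
  · omega
  · rintro hnot ⟨w, hw, hwK⟩
    have h3 : X ∩ F = ∅ := by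
      rw [Finset.eq_empty_iff_forall_notMem]
      intro e he
      obtain ⟨rfl, he⟩ := hXF e he
      exact hnot he
    obtain ⟨y, z, p1, hyz, q1, heq, hy, hq⟩ :=
      exists_last_exit (p.takeUntil w hw) ⟨a, Walk.start_mem_support _, ha⟩ hwK
    have h4 : s(y, z) ∈ X := by
      simp only [hX, Finset.mem_filter, List.mem_toFinset]
      refine ⟨p.edges_takeUntil_subset_edges hw ?_, y, hy, z, hq z q1.start_mem_support, rfl⟩
      rw [heq]
      simp
    have h5 : 0 < X.card := Finset.card_pos.2 ⟨_, h4⟩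
    rw [h3, Finset.card_empty] at hcut
    omega

/-- Inside `K`, every vertex `x` can be reached from the root of `K` at the cost predicted by the
distances from `r`: a shortest path from `r` to `x` enters `K` through the beam and stays there. -/
lemma HasBeam.exists_inner [Fintype V] (h : HasBeam G F r K i u v) {x : V} (hx : x ∈ K) :
    ∃ W : G.Walk u x, W.IsPath ∧ (∀ w ∈ W.support, w ∈ K) ∧
      walkWt (F : Set (Sym2 V)) W = distF G F r x - i := by
  obtain ⟨P, hP, hPw⟩ := exists_shortest (F := F) (h.comp.mem x hx)
  obtain ⟨s, z, p, hsz, q, rfl, hz, hp⟩ :=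
    exists_first_entry P ⟨x, P.end_mem_support, hx⟩ h.notMem
  have hs : s ∉ K := hp s p.end_mem_support
  obtain ⟨hzi, hsi⟩ := h.boundary hz hs hsz.symm
  have hqP : q.IsPath := (hP.of_append_right).of_cons
  have hnd := hP.of_append_right.isTrail
  rw [Walk.isTrail_cons] at hnd
  have h1 := distF_le (F := F) p hP.of_append_left
  obtain ⟨h2, h3⟩ := h.trail_bound hz hx hzi q hqP.isTrail
  rw [walkWt_append, walkWt_cons] at hPw
  rcases edgeWt_cases (F : Set (Sym2 V)) s(s, z) with ⟨h4, h5⟩ | h4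
  · rw [Sym2.eq_swap] at h5
    obtain ⟨rfl, rfl⟩ := h.uniq z hz s hs h5
    have h6 := h3 (by rw [Sym2.eq_swap]; exact hnd.2)
    refine ⟨q, hqP, ?_, by omega⟩
    by_contra! hcon
    have := h6 hcon
    omega
  · omega

/-- A lower bound for the weight of a path that starts outside `K`, at a vertex for which the
beam is traversed towards `K`, and that ends in `K`. In case of equality, the path enters `K`
through the beam and stays in `K` afterwards. -/
lemma HasBeam.path_bound [Fintype V] (h : HasBeam G F r K i u v) {r' x : V} (hr' : r' ∉ K)
    (hcong : distF G F r' u = distF G F r' v - 1) (hx : x ∈ K) (P : G.Walk r' x)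
    (hP : P.IsPath) :
    distF G F r' u + (distF G F r x - i) ≤ walkWt (F : Set (Sym2 V)) P ∧
      (walkWt (F : Set (Sym2 V)) P = distF G F r' u + (distF G F r x - i) →
        ∃ (p : G.Walk r' v) (W : G.Walk u x), (∀ w ∈ p.support, w ∉ K) ∧
          (∀ w ∈ W.support, w ∈ K) ∧ P = (p.concat h.adj.symm).append W ∧
          walkWt (F : Set (Sym2 V)) (p.concat h.adj.symm) = distF G F r' u ∧
          walkWt (F : Set (Sym2 V)) W = distF G F r x - i) := by
  obtain ⟨s, z, p, hsz, q, rfl, hz, hp⟩ :=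
    exists_first_entry P ⟨x, P.end_mem_support, hx⟩ hr'
  have hs : s ∉ K := hp s p.end_mem_support
  obtain ⟨hzi, hsi⟩ := h.boundary hz hs hsz.symm
  have hpP : p.IsPath := hP.of_append_left
  have hqP : q.IsPath := (hP.of_append_right).of_cons
  have hnd := hP.of_append_right.isTrail
  rw [Walk.isTrail_cons] at hnd
  have h1 := distF_le (F := F) p hpP
  obtain ⟨h2, h3⟩ := h.trail_bound hz hx hzi q hqP.isTrail
  rw [walkWt_append, walkWt_cons]
  rcases edgeWt_cases (F : Set (Sym2 V)) s(s, z) with ⟨h4, h5⟩ | h4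
  · rw [Sym2.eq_swap] at h5
    obtain ⟨rfl, rfl⟩ := h.uniq z hz s hs h5
    have h6 := h3 (by rw [Sym2.eq_swap]; exact hnd.2)
    refine ⟨by omega, fun heq => ⟨p, q, hp, ?_, ?_, ?_, by omega⟩⟩
    · by_contra! hcon
      have := h6 hcon
      omega
    · simp [Walk.concat_append]
    · rw [Walk.concat_eq_append, walkWt_append, walkWt_cons, walkWt_nil]
      omega
  · -- closing up through `K` and the beam gives a trail from `r'` to the antiroot
    obtain ⟨W, hW, hWK, hWw⟩ := h.exists_inner hz
    have hszF : s(s, z) ∉ F := fun hm => by simp [edgeWt, hm] at h4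
    have huv : edgeWt (F : Set (Sym2 V)) s(u, v) = -1 := by simp [edgeWt, h.mem_F]
    have hWe : ∀ a b, s(a, b) ∈ W.edges → a ∈ K ∧ b ∈ K := fun a b hab =>
      ⟨hWK a (W.fst_mem_support_of_mem_edges hab), hWK b (W.snd_mem_support_of_mem_edges hab)⟩
    have hpe : ∀ a b, s(a, b) ∈ p.edges → a ∉ K ∧ b ∉ K := fun a b hab =>
      ⟨hp a (p.fst_mem_support_of_mem_edges hab), hp b (p.snd_mem_support_of_mem_edges hab)⟩
    have htr : (p.append (.cons hsz (W.reverse.concat h.adj))).IsTrail := by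
      rw [Walk.isTrail_def]
      simp only [Walk.edges_append, Walk.edges_cons, Walk.edges_concat, Walk.edges_reverse,
        List.concat_eq_append]
      rw [List.nodup_append', List.nodup_cons, List.nodup_append']
      refine ⟨hpP.isTrail.edges_nodup, ⟨?_, ?_, by simp, ?_⟩, ?_⟩
      · simp only [List.mem_append, List.mem_reverse, List.mem_singleton, not_or]
        exact ⟨fun hm => hs (hWe _ _ hm).1, fun hm => hszF (hm ▸ h.mem_F)⟩
      · exact List.nodup_reverse.2 hW.isTrail.edges_nodup
      · intro e he he'
        rw [List.mem_singleton] at he'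
        subst he'
        exact h.snd_notMem (hWe _ _ (List.mem_reverse.1 he)).2
      · intro e he he'
        simp only [List.mem_cons, List.mem_append, List.mem_reverse, List.not_mem_nil,
          or_false] at he'
        rcases he' with rfl | he' | rfl
        · exact (hpe _ _ he).2 hz
        · induction e with | _ a b => exact (hpe _ _ he).1 (hWe _ _ he').1
        · exact (hpe _ _ he).1 h.fst_mem
    have h7 := distF_le_trail h.pos _ htr
    have h8 : walkWt (F : Set (Sym2 V)) W.reverse = walkWt (F : Set (Sym2 V)) W := by
      simp [walkWt]
    rw [walkWt_append, walkWt_cons, Walk.concat_eq_append, walkWt_append, walkWt_cons, walkWt_nil,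
      h8, h4, huv, hWw, hzi] at h7
    exact ⟨by omega, fun heq => by omega⟩

/-- The distance to a vertex of `K` from a vertex outside `K` for which the beam is traversed
towards `K`. -/
lemma HasBeam.distF_eq [Fintype V] (h : HasBeam G F r K i u v) {r' x : V} (hr' : r' ∉ K)
    (hcong : distF G F r' u = distF G F r' v - 1) (hx : x ∈ K) :
    distF G F r' x = distF G F r' u + (distF G F r x - i) := by
  have hreach : G.Reachable r' u := by
    by_contra hcon
    have h1 := distF_of_not_reachable (F := F) hcon
    have h2 := distF_of_not_reachable (F := F) (fun hv => hcon (hv.trans h.adj.symm.reachable))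
    omega
  have hui := (h.boundary h.fst_mem h.snd_notMem h.adj).1
  obtain ⟨W, hW, hWK, hWw⟩ := h.exists_inner hx
  apply le_antisymm
  · obtain ⟨Q, hQ, hQw⟩ := exists_shortest (F := F) hreach
    obtain ⟨p, W', hp, -, rfl, hpw, -⟩ :=
      (h.path_bound hr' hcong h.fst_mem Q hQ).2 (by rw [hQw, hui]; ring)
    have htr : ((p.concat h.adj.symm).append W).IsTrail := by
      rw [Walk.isTrail_def, Walk.edges_append, List.nodup_append']
      refine ⟨hQ.of_append_left.isTrail.edges_nodup, hW.isTrail.edges_nodup, ?_⟩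
      intro e he he'
      rw [Walk.edges_concat, List.concat_eq_append, List.mem_append, List.mem_singleton] at he
      rcases he with he | rfl
      · induction e with | _ a b =>
        exact hp a (p.fst_mem_support_of_mem_edges he) (hWK a (W.fst_mem_support_of_mem_edges he'))
      · exact h.snd_notMem (hWK v (W.fst_mem_support_of_mem_edges he'))
    have h1 := distF_le_trail h.pos _ htr
    rw [walkWt_append, hpw, hWw] at h1
    exact h1
  · obtain ⟨Q, hQ, hQw⟩ := exists_shortest (F := F) (hreach.trans ⟨W⟩)
    rw [← hQw]
    exact (h.path_bound hr' hcong hx Q hQ).1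

/-- Every decapital distance component has a beam, by the uniqueness of the edge of a minimum
join that leaves a level component. -/
lemma IsDecapDistComp.hasBeam [Fintype V] {T : Set V} (hbip : G.Colorable 2)
    (hF : IsMinJoin G T F) (hK : IsDecapDistComp G F r K) (huv : s(u, v) ∈ F) (hu : u ∈ K)
    (hv : v ∉ K) : ∃ i, HasBeam G F r K i u v := by
  obtain ⟨i, ⟨-, -, hle, hconn, hout⟩, hr⟩ := hK
  have hpos := hF.wsum_nonneg
  have hFe : ∀ e ∈ F, e ∈ G.edgeSet := fun e he => hF.1.1 he
  have hadj : G.Adj u v := hFe _ huv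
  have hsize := isJoinSize_distF hbip hpos hFe r
  have hwalk : ∀ a ∈ K, ∀ b ∈ K, ∃ p : G.Walk a b, ∀ q ∈ p.support, q ∈ K := by
    intro a ha b hb
    obtain ⟨p⟩ := hconn.preconnected ⟨a, ha⟩ ⟨b, hb⟩
    have hp : ∀ q ∈ (p.map (Embedding.induce K).toHom).support, q ∈ K := by
      intro q hq
      rw [Walk.support_map, List.mem_map] at hq
      obtain ⟨y, -, rfl⟩ := hq
      exact y.2
    exact ⟨_, hp⟩
  have hru : G.Reachable r u := by
    by_contra hcon
    have h1 := distF_of_not_reachable (F := F) hcon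
    have h2 := distF_of_not_reachable (F := F) (fun h => hcon (h.trans hadj.symm.reachable))
    have h3 : distF G F r u ≤ i := hle hu
    exact hv (hout u hu v (show distF G F r v ≤ i by omega) hadj)
  have hcomp : IsLevelComp G (fun x => F.card + distF G F r x) (G.Reachable r) (F.card + i) K := by
    have hle' : ∀ a ∈ K, (F.card : ℤ) + distF G F r a ≤ F.card + i := by
      intro a ha
      have : distF G F r a ≤ i := hle ha
      omega
    refine ⟨fun a ha b hb => ?_, hle', fun y hy z hz hyz => ?_, fun a ha => ?_⟩
    · obtain ⟨p, hp⟩ := hwalk a ha b hb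
      exact ⟨p, fun q hq => hle' q (hp q hq)⟩
    · by_contra hcon
      exact hz (hout y hy z (show distF G F r z ≤ i by omega) hyz)
    · obtain ⟨p, -⟩ := hwalk u hu a ha
      exact hru.trans ⟨p⟩
  have hmin : MinAt G (bd F + pt r) (fun x => F.card + distF G F r x) r F := by
    refine ⟨hFe, ?_, ?_⟩
    · have := two_fn (V := V); grind
    · simp [distF_self hpos]
  obtain ⟨g, hg⟩ := hcomp.unique_leaving hsize hu hr hmin
  refine ⟨i, hpos, hFe, hsize, hcomp, hr, huv, hu, hv, fun y hy z hz hyz => ?_⟩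
  have h1 := (hg y hy z hz hyz).trans (hg u hu v hv huv).symm
  rw [Sym2.eq_iff] at h1
  rcases h1 with h1 | ⟨rfl, rfl⟩
  · exact h1
  · exact absurd hy hv

end Component

/-- With `K` a decapital distance component w.r.t. `r`, `F`-root `rK`,
`r' ∉ K` `K`-congruent to `r`, and `x ∈ K`: a path between `r'` and `x` is
`F`-shortest iff it is the edge-disjoint concatenation of an `F`-shortest path
between `r'` and `rK` and a path inside `K` between `rK` and `x` that is
`F`-shortest among the paths of `K` between `rK` and `x`. -/
theorem stmt_3 {V : Type*} [Fintype V] [DecidableEq V]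
    (G : SimpleGraph V) (T : Set V) (hbip : G.Colorable 2) (hgraft : IsGraft G T)
    (F : Set (Sym2 V)) (hF : IsMinJoin G T F)
    (r : V) (K : Set V) (hK : IsDecapDistComp G F r K)
    (rK sK : V) (hadj : G.Adj rK sK) (hbeam : s(rK, sK) ∈ F)
    (hrK : rK ∈ K) (hsK : sK ∉ K)
    (r' : V) (hr' : r' ∉ K)
    (hcong : distF G F r' rK = distF G F r' sK - 1)
    (x : V) (hx : x ∈ K)
    (P : G.Walk r' x) (hP : P.IsPath) :
    walkWt F P = distF G F r' x ↔
      ∃ (Q : G.Walk r' rK) (W : G.Walk rK x),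
        Q.IsPath ∧ walkWt F Q = distF G F r' rK ∧
        W.IsPath ∧ (∀ v ∈ W.support, v ∈ K) ∧
        (∀ W' : G.Walk rK x, W'.IsPath → (∀ v ∈ W'.support, v ∈ K) →
          walkWt F W ≤ walkWt F W') ∧
        (∀ e ∈ Q.edges, e ∉ W.edges) ∧
        P = Q.append W := by
  obtain ⟨F, rfl⟩ : ∃ F' : Finset (Sym2 V), F = F' := ⟨F.toFinite.toFinset, by simp⟩
  obtain ⟨i, h⟩ := hK.hasBeam hbip hF hbeam hrK hsK
  have hdist := h.distF_eq hr' hcong hx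
  constructor
  · intro hPw
    obtain ⟨p, W, hp, hWK, rfl, hpw, hWw⟩ :=
      (h.path_bound hr' hcong hx P hP).2 (hPw.trans hdist)
    refine ⟨p.concat h.adj.symm, W, hP.of_append_left, hpw, hP.of_append_right, hWK, ?_, ?_, rfl⟩
    · intro W' hW' _
      rw [hWw]
      exact (h.trail_bound hrK hx (h.boundary hrK hsK hadj).1 W' hW'.isTrail).1
    · have := hP.isTrail.edges_nodup
      rw [Walk.edges_append, List.nodup_append'] at this
      exact fun e he he' => this.2.2 he he'
  · rintro ⟨Q, W, -, hQw, -, -, hWmin, -, rfl⟩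
    obtain ⟨W', hW', hWK', hWw'⟩ := h.exists_inner hx
    have h1 := hWmin W' hW' hWK'
    have h2 := distF_le (F := F) _ hP
    rw [walkWt_append] at h2 ⊢
    omega
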